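/- arXiv:2211.03904 — 3 statements merged into one kernel-verified Lean document; each statement's English description precedes it below -/
import Mathlib

section
/- The generalized y-translation with arbitrary time-dependent coefficient is a symmetry of the potential Kawahara–KP equation in linearized (characteristic) form: if v solves the potential Kawahara–KP equation, f : ℝ → ℝ is any smooth function, and p(t,x,y) := -(1/(2σ))·y·f'(t)·v_x(t,x,y) - f(t)·v_y(t,x,y) + (1/(2σ))·y·( x·f''(t) + (1/(6σ))·y²·f'''(t) ), then p satisfies the linearized equation p_tx + v_xx·p_x + v_x·p_xx + β·p_xxxx + p_xxxxxx - σ·p_yy = 0 at every point of ℝ³. -/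
/-- Partial derivative in `t` of a function `v (t, x, y)` given in curried form. -/
noncomputable def pt (v : ℝ → ℝ → ℝ → ℝ) : ℝ → ℝ → ℝ → ℝ :=
  fun t x y => deriv (fun s => v s x y) t

/-- Partial derivative in `x` of a function `v (t, x, y)` given in curried form. -/
noncomputable def px (v : ℝ → ℝ → ℝ → ℝ) : ℝ → ℝ → ℝ → ℝ :=
  fun t x y => deriv (fun s => v t s y) x

/-- Partial derivative in `y` of a function `v (t, x, y)` given in curried form. -/
noncomputable def py (v : ℝ → ℝ → ℝ → ℝ) : ℝ → ℝ → ℝ → ℝ :=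
  fun t x y => deriv (fun s => v t x s) y

/-- The potential Kawahara–KP operator:
`v_tx + v_x·v_xx + β·v_xxxx + v_xxxxxx - σ·v_yy`. -/
noncomputable def KKP (β σ : ℝ) (v : ℝ → ℝ → ℝ → ℝ) : ℝ → ℝ → ℝ → ℝ :=
  fun t x y =>
    px (pt v) t x y + px v t x y * px (px v) t x y
      + β * px (px (px (px v))) t x y
      + px (px (px (px (px (px v))))) t x y
      - σ * py (py v) t x y

/-- The linearization of the potential Kawahara–KP equation at `v`, applied to `p`:
`p_tx + v_xx·p_x + v_x·p_xx + β·p_xxxx + p_xxxxxx - σ·p_yy`. -/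
noncomputable def KKPlin (β σ : ℝ) (v p : ℝ → ℝ → ℝ → ℝ) : ℝ → ℝ → ℝ → ℝ :=
  fun t x y =>
    px (pt p) t x y + px (px v) t x y * px p t x y + px v t x y * px (px p) t x y
      + β * px (px (px (px p))) t x y
      + px (px (px (px (px (px p))))) t x y
      - σ * py (py p) t x y

/-!
Differentiating the equation shows that `v_x` and `v_y` solve the linearized equation `L u = 0`.
For a coefficient `a = a(t, y)`,
`L (a u) = a L u + a_t u_x - σ (2 a_y u_y + a_yy u)`,
and `L 1 = 0`, `L x = v_xx`. The characteristic is a sum of four such products, with `u` equal to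
`v_x`, `v_y`, `x` and `1`, and the four contributions cancel.
-/

open Function
open scoped ContDiff

section PartialDerivatives

lemma fderiv_fderiv_apply_comm {E F : Type*} [NormedAddCommGroup E] [NormedSpace ℝ E]
    [NormedAddCommGroup F] [NormedSpace ℝ F] {f : E → F} (hf : ContDiff ℝ 2 f) (q a b : E) :
    fderiv ℝ (fun p => fderiv ℝ f p a) q b = fderiv ℝ (fun p => fderiv ℝ f p b) q a := by
  have hdiff : DifferentiableAt ℝ (fderiv ℝ f) q :=
    (hf.fderiv_right (m := 1) (by norm_num)).differentiable (by simp) q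
  have hsymm : IsSymmSndFDerivAt ℝ f q := hf.contDiffAt.isSymmSndFDerivAt (by simp)
  rw [fderiv_clm_apply hdiff (differentiableAt_const a),
    fderiv_clm_apply hdiff (differentiableAt_const b)]
  simpa using hsymm b a

variable {v : ℝ → ℝ → ℝ → ℝ} {m n : ℕ∞ω}

lemma hasDerivAt_fderiv_t (hv : Differentiable ℝ ↿v) (t x y : ℝ) :
    HasDerivAt (fun s => v s x y) (fderiv ℝ ↿v (t, x, y) (1, 0, 0)) t := by
  have hline : HasDerivAt (fun s : ℝ => ((s, x, y) : ℝ × ℝ × ℝ)) (1, 0, 0) t :=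
    (hasDerivAt_id t).prodMk ((hasDerivAt_const t x).prodMk (hasDerivAt_const t y))
  exact (hv (t, x, y)).hasFDerivAt.comp_hasDerivAt t hline

lemma hasDerivAt_fderiv_x (hv : Differentiable ℝ ↿v) (t x y : ℝ) :
    HasDerivAt (fun s => v t s y) (fderiv ℝ ↿v (t, x, y) (0, 1, 0)) x := by
  have hline : HasDerivAt (fun s : ℝ => ((t, s, y) : ℝ × ℝ × ℝ)) (0, 1, 0) x :=
    (hasDerivAt_const x t).prodMk ((hasDerivAt_id x).prodMk (hasDerivAt_const x y))
  exact (hv (t, x, y)).hasFDerivAt.comp_hasDerivAt x hline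

lemma hasDerivAt_fderiv_y (hv : Differentiable ℝ ↿v) (t x y : ℝ) :
    HasDerivAt (fun s => v t x s) (fderiv ℝ ↿v (t, x, y) (0, 0, 1)) y := by
  have hline : HasDerivAt (fun s : ℝ => ((t, x, s) : ℝ × ℝ × ℝ)) (0, 0, 1) y :=
    (hasDerivAt_const y t).prodMk ((hasDerivAt_const y x).prodMk (hasDerivAt_id y))
  exact (hv (t, x, y)).hasFDerivAt.comp_hasDerivAt y hline

lemma uncurry_pt (hv : Differentiable ℝ ↿v) :
    ↿(pt v) = fun q => fderiv ℝ ↿v q (1, 0, 0) :=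
  funext fun (t, x, y) => (hasDerivAt_fderiv_t hv t x y).deriv

lemma uncurry_px (hv : Differentiable ℝ ↿v) :
    ↿(px v) = fun q => fderiv ℝ ↿v q (0, 1, 0) :=
  funext fun (t, x, y) => (hasDerivAt_fderiv_x hv t x y).deriv

lemma uncurry_py (hv : Differentiable ℝ ↿v) :
    ↿(py v) = fun q => fderiv ℝ ↿v q (0, 0, 1) :=
  funext fun (t, x, y) => (hasDerivAt_fderiv_y hv t x y).deriv

lemma hasDerivAt_px (hv : Differentiable ℝ ↿v) (t x y : ℝ) :
    HasDerivAt (fun s => v t s y) (px v t x y) x :=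
  (hasDerivAt_fderiv_x hv t x y).differentiableAt.hasDerivAt

lemma hasDerivAt_py (hv : Differentiable ℝ ↿v) (t x y : ℝ) :
    HasDerivAt (fun s => v t x s) (py v t x y) y :=
  (hasDerivAt_fderiv_y hv t x y).differentiableAt.hasDerivAt

lemma contDiff_pt (hv : ContDiff ℝ n ↿v) (hmn : m + 1 ≤ n) : ContDiff ℝ m ↿(pt v) := by
  rw [uncurry_pt ((hv.of_le hmn).differentiable (by simp))]
  exact (hv.fderiv_right hmn).clm_apply contDiff_const

lemma contDiff_px (hv : ContDiff ℝ n ↿v) (hmn : m + 1 ≤ n) : ContDiff ℝ m ↿(px v) := by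
  rw [uncurry_px ((hv.of_le hmn).differentiable (by simp))]
  exact (hv.fderiv_right hmn).clm_apply contDiff_const

lemma contDiff_py (hv : ContDiff ℝ n ↿v) (hmn : m + 1 ≤ n) : ContDiff ℝ m ↿(py v) := by
  rw [uncurry_py ((hv.of_le hmn).differentiable (by simp))]
  exact (hv.fderiv_right hmn).clm_apply contDiff_const

lemma contDiff_iterate_px (hv : ContDiff ℝ n ↿v) (k : ℕ) (hmn : m + k ≤ n) :
    ContDiff ℝ m ↿(px^[k] v) := by
  induction k generalizing m with
  | zero => exact hv.of_le (by simpa using hmn)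
  | succ k ih =>
    rw [iterate_succ_apply']
    exact contDiff_px (ih (m := m + 1) (by rwa [add_assoc, add_comm 1, ← Nat.cast_succ])) le_rfl

lemma pt_px_comm (hv : ContDiff ℝ 2 ↿v) : pt (px v) = px (pt v) := by
  have hv₁ : Differentiable ℝ ↿v := hv.differentiable (by simp)
  have hvt : Differentiable ℝ ↿(pt v) :=
    (contDiff_pt hv (m := 1) (by norm_num)).differentiable (by simp)
  have hvx : Differentiable ℝ ↿(px v) :=
    (contDiff_px hv (m := 1) (by norm_num)).differentiable (by simp)
  funext t x y
  calc pt (px v) t x y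
      = fderiv ℝ ↿(px v) (t, x, y) (1, 0, 0) := congrFun (uncurry_pt hvx) (t, x, y)
    _ = fderiv ℝ ↿(pt v) (t, x, y) (0, 1, 0) := by
      rw [uncurry_px hv₁, uncurry_pt hv₁, fderiv_fderiv_apply_comm hv]
    _ = px (pt v) t x y := (congrFun (uncurry_px hvt) (t, x, y)).symm

lemma pt_py_comm (hv : ContDiff ℝ 2 ↿v) : pt (py v) = py (pt v) := by
  have hv₁ : Differentiable ℝ ↿v := hv.differentiable (by simp)
  have hvt : Differentiable ℝ ↿(pt v) :=
    (contDiff_pt hv (m := 1) (by norm_num)).differentiable (by simp)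
  have hvy : Differentiable ℝ ↿(py v) :=
    (contDiff_py hv (m := 1) (by norm_num)).differentiable (by simp)
  funext t x y
  calc pt (py v) t x y
      = fderiv ℝ ↿(py v) (t, x, y) (1, 0, 0) := congrFun (uncurry_pt hvy) (t, x, y)
    _ = fderiv ℝ ↿(pt v) (t, x, y) (0, 0, 1) := by
      rw [uncurry_py hv₁, uncurry_pt hv₁, fderiv_fderiv_apply_comm hv]
    _ = py (pt v) t x y := (congrFun (uncurry_py hvt) (t, x, y)).symm

lemma py_px_comm (hv : ContDiff ℝ 2 ↿v) : py (px v) = px (py v) := by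
  have hv₁ : Differentiable ℝ ↿v := hv.differentiable (by simp)
  have hvx : Differentiable ℝ ↿(px v) :=
    (contDiff_px hv (m := 1) (by norm_num)).differentiable (by simp)
  have hvy : Differentiable ℝ ↿(py v) :=
    (contDiff_py hv (m := 1) (by norm_num)).differentiable (by simp)
  funext t x y
  calc py (px v) t x y
      = fderiv ℝ ↿(px v) (t, x, y) (0, 0, 1) := congrFun (uncurry_py hvx) (t, x, y)
    _ = fderiv ℝ ↿(py v) (t, x, y) (0, 1, 0) := by
      rw [uncurry_px hv₁, uncurry_py hv₁, fderiv_fderiv_apply_comm hv]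
    _ = px (py v) t x y := (congrFun (uncurry_px hvy) (t, x, y)).symm

lemma py_iterate_px_comm (k : ℕ) (hv : ContDiff ℝ (k + 1) ↿v) :
    py (px^[k] v) = px^[k] (py v) := by
  induction k generalizing v with
  | zero => rfl
  | succ k ih =>
    have htwo : (2 : ℕ∞ω) ≤ ((k + 1 : ℕ) : ℕ∞ω) + 1 := by
      exact_mod_cast (by lia : 2 ≤ k + 1 + 1)
    rw [iterate_succ_apply, ih (contDiff_px hv (by simp)), iterate_succ_apply,
      py_px_comm (hv.of_le htwo)]

lemma iterate_px_apply (v : ℝ → ℝ → ℝ → ℝ) (k : ℕ) (t x y : ℝ) :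
    px^[k] v t x y = iteratedDeriv k (fun s => v t s y) x := by
  induction k generalizing v with
  | zero => simp
  | succ k ih =>
    rw [iterate_succ_apply, ih, iteratedDeriv_succ']
    rfl

end PartialDerivatives

section Symmetries

variable {v : ℝ → ℝ → ℝ → ℝ}

lemma KKPlin_px (hv : ContDiff ℝ 7 ↿v) (β σ : ℝ) :
    KKPlin β σ v (px v) = px (KKP β σ v) := by
  have hpx (k : ℕ) (hk : (1 + k : ℕ∞ω) ≤ 7) : Differentiable ℝ ↿(px^[k] v) :=
    (contDiff_iterate_px hv k hk).differentiable (by simp)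
  have hpt : ContDiff ℝ 2 ↿(pt v) := contDiff_pt hv (by norm_num)
  have hpx_pt : Differentiable ℝ ↿(px (pt v)) :=
    (contDiff_px hpt (m := 1) (by norm_num)).differentiable (by simp)
  have hpy : ContDiff ℝ 2 ↿(py v) := contDiff_py hv (by norm_num)
  have hpy_py : Differentiable ℝ ↿(py (py v)) :=
    (contDiff_py hpy (m := 1) (by norm_num)).differentiable (by simp)
  have hv₂ : ContDiff ℝ 2 ↿v := hv.of_le (by norm_num)
  funext t x y
  have hKKP := ((((hasDerivAt_px hpx_pt t x y).add
    ((hasDerivAt_px (hpx 1 (by norm_num)) t x y).mul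
      (hasDerivAt_px (hpx 2 (by norm_num)) t x y))).add
    ((hasDerivAt_px (hpx 4 (by norm_num)) t x y).const_mul β)).add
    (hasDerivAt_px (hpx 6 (by norm_num)) t x y)).sub
    ((hasDerivAt_px hpy_py t x y).const_mul σ)
  refine Eq.trans ?_ hKKP.deriv.symm
  simp only [KKPlin, iterate_succ_apply, iterate_zero_apply, pt_px_comm hv₂, py_px_comm hv₂,
    py_px_comm hpy]
  ring

lemma KKPlin_py (hv : ContDiff ℝ 7 ↿v) (β σ : ℝ) :
    KKPlin β σ v (py v) = py (KKP β σ v) := by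
  have hpx (k : ℕ) (hk : (1 + k : ℕ∞ω) ≤ 7) : Differentiable ℝ ↿(px^[k] v) :=
    (contDiff_iterate_px hv k hk).differentiable (by simp)
  have hpt : ContDiff ℝ 2 ↿(pt v) := contDiff_pt hv (by norm_num)
  have hpx_pt : Differentiable ℝ ↿(px (pt v)) :=
    (contDiff_px hpt (m := 1) (by norm_num)).differentiable (by simp)
  have hpy : ContDiff ℝ 2 ↿(py v) := contDiff_py hv (by norm_num)
  have hpy_py : Differentiable ℝ ↿(py (py v)) :=
    (contDiff_py hpy (m := 1) (by norm_num)).differentiable (by simp)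
  have hcomm (k : ℕ) (hk : (k + 1 : ℕ∞ω) ≤ 7) : py (px^[k] v) = px^[k] (py v) :=
    py_iterate_px_comm k (hv.of_le hk)
  funext t x y
  have hKKP := ((((hasDerivAt_py hpx_pt t x y).add
    ((hasDerivAt_py (hpx 1 (by norm_num)) t x y).mul
      (hasDerivAt_py (hpx 2 (by norm_num)) t x y))).add
    ((hasDerivAt_py (hpx 4 (by norm_num)) t x y).const_mul β)).add
    (hasDerivAt_py (hpx 6 (by norm_num)) t x y)).sub
    ((hasDerivAt_py hpy_py t x y).const_mul σ)
  refine Eq.trans ?_ hKKP.deriv.symm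
  rw [hcomm 1 (by norm_num), hcomm 2 (by norm_num), hcomm 4 (by norm_num), hcomm 6 (by norm_num),
    py_px_comm hpt, ← pt_py_comm (hv.of_le (by norm_num))]
  simp only [KKPlin, iterate_succ_apply, iterate_zero_apply]
  ring

end Symmetries

/-- The slices of `p` have the derivatives occurring in `KKPlin`, which makes `KKPlin` additive.
No joint regularity is asked for: the characteristic involves `f'''`, hence is only once
differentiable in `t` when `f` is of class `C^4`. -/
structure HasKKPDerivs (p : ℝ → ℝ → ℝ → ℝ) : Prop where
  differentiable_t : ∀ x y, Differentiable ℝ fun t => p t x y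
  differentiable_pt_x : ∀ t y, Differentiable ℝ fun x => pt p t x y
  contDiff_x : ∀ t y, ContDiff ℝ 6 fun x => p t x y
  contDiff_y : ∀ t x, ContDiff ℝ 2 fun y => p t x y

namespace HasKKPDerivs

variable {p q : ℝ → ℝ → ℝ → ℝ}

lemma of_contDiff (hp : ContDiff ℝ 6 ↿p) : HasKKPDerivs p where
  differentiable_t x y t :=
    (hasDerivAt_fderiv_t (hp.differentiable (by simp)) t x y).differentiableAt
  differentiable_pt_x t y x :=
    (hasDerivAt_px ((contDiff_pt hp (m := 1) (by norm_num)).differentiable (by simp))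
      t x y).differentiableAt
  contDiff_x t y := hp.comp (by fun_prop : ContDiff ℝ 6 fun x : ℝ => (t, x, y))
  contDiff_y t x :=
    (hp.of_le (by norm_num)).comp (by fun_prop : ContDiff ℝ 2 fun y : ℝ => (t, x, y))

lemma pt_add (hp : HasKKPDerivs p) (hq : HasKKPDerivs q) : pt (p + q) = pt p + pt q := by
  funext t x y
  exact deriv_add (hp.differentiable_t x y t) (hq.differentiable_t x y t)

lemma px_pt_add (hp : HasKKPDerivs p) (hq : HasKKPDerivs q) :
    px (pt (p + q)) = px (pt p) + px (pt q) := by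
  rw [pt_add hp hq]
  funext t x y
  exact deriv_add (hp.differentiable_pt_x t y x) (hq.differentiable_pt_x t y x)

lemma py_py_add (hp : HasKKPDerivs p) (hq : HasKKPDerivs q) :
    py (py (p + q)) = py (py p) + py (py q) := by
  have hpy : py (p + q) = py p + py q := by
    funext t x y
    exact deriv_add ((hp.contDiff_y t x).differentiable (by simp) y)
      ((hq.contDiff_y t x).differentiable (by simp) y)
  rw [hpy]
  funext t x y
  exact deriv_add ((hp.contDiff_y t x).differentiable_deriv_two y)
    ((hq.contDiff_y t x).differentiable_deriv_two y)

lemma iterate_px_add (hp : HasKKPDerivs p) (hq : HasKKPDerivs q) {k : ℕ} (hk : k ≤ 6) :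
    px^[k] (p + q) = px^[k] p + px^[k] q := by
  have hk' : (k : ℕ∞ω) ≤ 6 := by exact_mod_cast hk
  funext t x y
  simp only [Pi.add_apply, iterate_px_apply]
  exact iteratedDeriv_add ((hp.contDiff_x t y).of_le hk').contDiffAt
    ((hq.contDiff_x t y).of_le hk').contDiffAt

lemma add (hp : HasKKPDerivs p) (hq : HasKKPDerivs q) : HasKKPDerivs (p + q) where
  differentiable_t x y := (hp.differentiable_t x y).add (hq.differentiable_t x y)
  differentiable_pt_x t y := by
    rw [pt_add hp hq]
    exact (hp.differentiable_pt_x t y).add (hq.differentiable_pt_x t y)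
  contDiff_x t y := (hp.contDiff_x t y).add (hq.contDiff_x t y)
  contDiff_y t x := (hp.contDiff_y t x).add (hq.contDiff_y t x)

end HasKKPDerivs

lemma KKPlin_add {p q : ℝ → ℝ → ℝ → ℝ} (hp : HasKKPDerivs p) (hq : HasKKPDerivs q)
    (β σ : ℝ) (v : ℝ → ℝ → ℝ → ℝ) :
    KKPlin β σ v (p + q) = KKPlin β σ v p + KKPlin β σ v q := by
  have hpx₁ := hp.iterate_px_add hq (k := 1) (by norm_num)
  have hpx₂ := hp.iterate_px_add hq (k := 2) (by norm_num)
  have hpx₄ := hp.iterate_px_add hq (k := 4) (by norm_num)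
  have hpx₆ := hp.iterate_px_add hq (k := 6) le_rfl
  simp only [iterate_succ_apply, iterate_zero_apply] at hpx₁ hpx₂ hpx₄ hpx₆
  funext t x y
  unfold KKPlin
  rw [hpx₆, hpx₄, hpx₂, hpx₁, hp.px_pt_add hq, hp.py_py_add hq]
  simp only [Pi.add_apply]
  ring

section Coefficients

variable {a : ℝ → ℝ → ℝ} {u : ℝ → ℝ → ℝ → ℝ}

lemma px_coeff_mul (a : ℝ → ℝ → ℝ) (u : ℝ → ℝ → ℝ → ℝ) :
    px (fun t x y => a t y * u t x y) = fun t x y => a t y * px u t x y := by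
  funext t x y
  exact deriv_const_mul_field (a t y)

lemma pt_coeff_mul (hu : ∀ x y, Differentiable ℝ fun t => u t x y)
    (ha : ∀ y, Differentiable ℝ fun t => a t y) :
    pt (fun t x y => a t y * u t x y) =
      fun t x y => deriv (fun s => a s y) t * u t x y + a t y * pt u t x y := by
  funext t x y
  exact deriv_fun_mul (ha y t) (hu x y t)

lemma px_pt_coeff_mul (hu : HasKKPDerivs u) (ha : ∀ y, Differentiable ℝ fun t => a t y) :
    px (pt fun t x y => a t y * u t x y) =
      fun t x y => deriv (fun s => a s y) t * px u t x y + a t y * px (pt u) t x y := by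
  rw [pt_coeff_mul hu.differentiable_t ha]
  funext t x y
  exact ((((hu.contDiff_x t y).differentiable (by simp) x).hasDerivAt.const_mul _).add
    ((hu.differentiable_pt_x t y x).hasDerivAt.const_mul _)).deriv

lemma py_py_coeff_mul (hu : ∀ t x, ContDiff ℝ 2 fun y => u t x y) (ha : ∀ t, ContDiff ℝ 2 (a t)) :
    py (py fun t x y => a t y * u t x y) =
      fun t x y => deriv (deriv (a t)) y * u t x y + 2 * deriv (a t) y * py u t x y
        + a t y * py (py u) t x y := by
  have ha₁ (t y : ℝ) : HasDerivAt (a t) (deriv (a t) y) y :=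
    ((ha t).differentiable (by simp) y).hasDerivAt
  have hu₁ (t x y : ℝ) : HasDerivAt (fun s => u t x s) (py u t x y) y :=
    ((hu t x).differentiable (by simp) y).hasDerivAt
  have hpy : (py fun t x y => a t y * u t x y) =
      fun t x y => deriv (a t) y * u t x y + a t y * py u t x y := by
    funext t x y
    exact ((ha₁ t y).mul (hu₁ t x y)).deriv
  rw [hpy]
  funext t x y
  have ha₂ : HasDerivAt (deriv (a t)) (deriv (deriv (a t)) y) y :=
    ((ha t).differentiable_deriv_two y).hasDerivAt
  have hu₂ : HasDerivAt (fun s => py u t x s) (py (py u) t x y) y :=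
    ((hu t x).differentiable_deriv_two y).hasDerivAt
  refine ((ha₂.mul (hu₁ t x y)).add ((ha₁ t y).mul hu₂)).deriv.trans ?_
  ring

lemma HasKKPDerivs.coeff_mul (hu : HasKKPDerivs u) (ha_t : ∀ y, Differentiable ℝ fun t => a t y)
    (ha_y : ∀ t, ContDiff ℝ 2 (a t)) : HasKKPDerivs fun t x y => a t y * u t x y where
  differentiable_t x y := (ha_t y).mul (hu.differentiable_t x y)
  differentiable_pt_x t y := by
    rw [pt_coeff_mul hu.differentiable_t ha_t]
    exact (((hu.contDiff_x t y).differentiable (by simp)).const_mul _).add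
      ((hu.differentiable_pt_x t y).const_mul _)
  contDiff_x t y := contDiff_const.mul (hu.contDiff_x t y)
  contDiff_y t x := (ha_y t).mul (hu.contDiff_y t x)

lemma KKPlin_coeff_mul (hu : HasKKPDerivs u) (ha_t : ∀ y, Differentiable ℝ fun t => a t y)
    (ha_y : ∀ t, ContDiff ℝ 2 (a t)) (β σ : ℝ) (v : ℝ → ℝ → ℝ → ℝ) (t x y : ℝ) :
    KKPlin β σ v (fun t x y => a t y * u t x y) t x y =
      a t y * KKPlin β σ v u t x y + deriv (fun s => a s y) t * px u t x y
        - σ * (2 * deriv (a t) y * py u t x y + deriv (deriv (a t)) y * u t x y) := by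
  simp only [KKPlin, px_coeff_mul, px_pt_coeff_mul hu ha_t, py_py_coeff_mul hu.contDiff_y ha_y]
  ring

end Coefficients

lemma KKPlin_one (β σ : ℝ) (v : ℝ → ℝ → ℝ → ℝ) (t x y : ℝ) :
    KKPlin β σ v (fun _ _ _ => 1) t x y = 0 := by
  simp [KKPlin, px, pt, py]

lemma KKPlin_x (β σ : ℝ) (v : ℝ → ℝ → ℝ → ℝ) (t x y : ℝ) :
    KKPlin β σ v (fun _ x _ => x) t x y = px (px v) t x y := by
  simp [KKPlin, px, pt, py]

lemma deriv_deriv_const_mul_cube (c y : ℝ) :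
    deriv (deriv fun s => c * s ^ 3) y = 6 * c * y := by
  have hderiv : (deriv fun s => c * s ^ 3) = fun s => c * (3 * s ^ 2) := by
    funext s
    rw [deriv_const_mul_field, deriv_pow_field]
    norm_num
  rw [hderiv, deriv_const_mul_field, deriv_const_mul_field, deriv_pow_field]
  ring

/- Making the right-hand side vanish by `A = B' / (2 σ)`, `C = -A'`, `D = C' / (6 σ)` leaves `B`
free; `B = -f` gives the characteristic. -/
lemma KKPlin_yTranslation_ansatz {β σ : ℝ} {v : ℝ → ℝ → ℝ → ℝ} (hv : ContDiff ℝ 7 ↿v)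
    (hsol : KKP β σ v = 0) {A B C D : ℝ → ℝ} (hA : Differentiable ℝ A) (hB : Differentiable ℝ B)
    (hC : Differentiable ℝ C) (hD : Differentiable ℝ D) (t x y : ℝ) :
    KKPlin β σ v (fun t x y =>
        A t * y * px v t x y + B t * py v t x y + C t * y * x + D t * y ^ 3) t x y =
      (deriv A t + C t) * y * px (px v) t x y + (deriv B t - 2 * σ * A t) * px (py v) t x y
        + (deriv C t - 6 * σ * D t) * y := by
  have hvx : HasKKPDerivs (px v) := .of_contDiff (contDiff_px hv (by norm_num))
  have hvy : HasKKPDerivs (py v) := .of_contDiff (contDiff_py hv (by norm_num))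
  have hx : HasKKPDerivs fun _ x _ => x := .of_contDiff (contDiff_fst.comp contDiff_snd)
  have hone : HasKKPDerivs fun _ _ _ => 1 := .of_contDiff contDiff_const
  have hAvx := hvx.coeff_mul (a := fun t y => A t * y) (by fun_prop) (by fun_prop)
  have hBvy := hvy.coeff_mul (a := fun t _ => B t) (by fun_prop) (by fun_prop)
  have hCx := hx.coeff_mul (a := fun t y => C t * y) (by fun_prop) (by fun_prop)
  have hDone := hone.coeff_mul (a := fun t y => D t * y ^ 3) (by fun_prop) (by fun_prop)
  have hLvx : KKPlin β σ v (px v) t x y = 0 := by rw [KKPlin_px hv, hsol]; simp [px]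
  have hLvy : KKPlin β σ v (py v) t x y = 0 := by rw [KKPlin_py hv, hsol]; simp [py]
  have hsum : (fun t x y =>
      A t * y * px v t x y + B t * py v t x y + C t * y * x + D t * y ^ 3) =
      (fun t x y => A t * y * px v t x y) + (fun t x y => B t * py v t x y)
        + (fun t x y => C t * y * x) + (fun t _ y => D t * y ^ 3 * 1) := by
    funext t x y
    simp only [Pi.add_apply, mul_one]
  rw [hsum, KKPlin_add ((hAvx.add hBvy).add hCx) hDone, KKPlin_add (hAvx.add hBvy) hCx,
    KKPlin_add hAvx hBvy]
  simp only [Pi.add_apply]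
  rw [KKPlin_coeff_mul hvx (a := fun t y => A t * y) (by fun_prop) (by fun_prop),
    KKPlin_coeff_mul hvy (a := fun t _ => B t) (by fun_prop) (by fun_prop),
    KKPlin_coeff_mul hx (a := fun t y => C t * y) (by fun_prop) (by fun_prop),
    KKPlin_coeff_mul hone (a := fun t y => D t * y ^ 3) (by fun_prop) (by fun_prop),
    hLvx, hLvy, KKPlin_x, KKPlin_one, py_px_comm (hv.of_le (by norm_num))]
  have hpx_x : px (fun _ x _ => x) t x y = 1 := deriv_id x
  have hpy_x : py (fun _ x _ => x) t x y = 0 := deriv_const y x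
  have hpx_one : px (fun _ _ _ => 1) t x y = 0 := deriv_const x 1
  have hpy_one : py (fun _ _ _ => 1) t x y = 0 := deriv_const y 1
  simp only [hpx_x, hpy_x, hpx_one, hpy_one, deriv_mul_const_field, deriv_const_mul_id',
    deriv_const', deriv_const, deriv_deriv_const_mul_cube]
  ring

theorem gen_y_translation_symmetry_KKP_general (β σ : ℝ) (hσ : σ ≠ 0)
    (v : ℝ → ℝ → ℝ → ℝ)
    (hv : ContDiff ℝ 7 (fun q : ℝ × ℝ × ℝ => v q.1 q.2.1 q.2.2))
    (hsol : ∀ t x y : ℝ, KKP β σ v t x y = 0)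
    (f : ℝ → ℝ) (hf : ContDiff ℝ 4 f) :
    ∀ t x y : ℝ,
      KKPlin β σ v
        (fun t x y => - (1 / (2 * σ)) * y * deriv f t * px v t x y
          - f t * py v t x y
          + (1 / (2 * σ)) * y * (x * deriv (deriv f) t
              + (1 / (6 * σ)) * y ^ 2 * deriv (deriv (deriv f)) t)) t x y = 0 := by
  intro t x y
  have hf₁ : ContDiff ℝ 3 (deriv f) := hf.deriv'
  have hf₂ : ContDiff ℝ 2 (deriv (deriv f)) := hf₁.deriv'
  have hf₃ : ContDiff ℝ 1 (deriv (deriv (deriv f))) := hf₂.deriv'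
  have hL := KKPlin_yTranslation_ansatz hv (funext₃ hsol)
    (A := fun t => -(1 / (2 * σ)) * deriv f t) (B := fun t => -f t)
    (C := fun t => 1 / (2 * σ) * deriv (deriv f) t)
    (D := fun t => 1 / (2 * σ) * (1 / (6 * σ)) * deriv (deriv (deriv f)) t)
    ((hf₁.differentiable (by simp)).const_mul _) (hf.differentiable (by simp)).fun_neg
    ((hf₂.differentiable (by simp)).const_mul _) ((hf₃.differentiable (by simp)).const_mul _)
    t x y
  simp only [deriv_const_mul_field, deriv.fun_neg] at hL
  convert hL using 1
  · congr 1
    funext t x y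
    ring
  · field_simp
    ring

/-- The generalized y-translation with arbitrary time-dependent coefficient is a
symmetry of the potential Kawahara–KP equation in linearized (characteristic) form. -/
theorem gen_y_translation_symmetry_KKP (β σ : ℝ) (hβ : β ≠ 0) (hσ : σ = 1 ∨ σ = -1)
    (v : ℝ → ℝ → ℝ → ℝ)
    (hv : ContDiff ℝ (⊤ : ℕ∞) (fun q : ℝ × ℝ × ℝ => v q.1 q.2.1 q.2.2))
    (hsol : ∀ t x y : ℝ, KKP β σ v t x y = 0)
    (f : ℝ → ℝ) (hf : ContDiff ℝ (⊤ : ℕ∞) f) :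
    ∀ t x y : ℝ,
      KKPlin β σ v
        (fun t x y => - (1 / (2 * σ)) * y * deriv f t * px v t x y
          - f t * py v t x y
          + (1 / (2 * σ)) * y * (x * deriv (deriv f) t
              + (1 / (6 * σ)) * y ^ 2 * deriv (deriv (deriv f)) t)) t x y = 0 :=
  gen_y_translation_symmetry_KKP_general β σ (by rcases hσ with rfl | rfl <;> norm_num) v
    (contDiff_infty.mp hv 7) hsol f (contDiff_infty.mp hf 4)
end

section
/- The potential Kawahara–KP equation is the Euler–Lagrange equation of the Lagrangian L: for every smooth function v : ℝ³ → ℝ and every smooth compactly supported function φ : ℝ³ → ℝ, the derivative at ε = 0 of the function ε ↦ ∫_{ℝ³} ( L[v + ε·φ] - L[v] ) dt dx dy equals ∫_{ℝ³} ( v_tx + v_x·v_xx + β·v_xxxx + v_xxxxxx - σ·v_yy )·φ dt dx dy, where for a smooth function w the Lagrangian density is L[w] := -(1/2)·w_t·w_x - (1/6)·w_x³ + (1/2)·β·w_xx² - (1/2)·w_xxx² + (1/2)·σ·w_y². -/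
/-- The Lagrangian density
`L[w] = -(1/2)·w_t·w_x - (1/6)·w_x³ + (1/2)·β·w_xx² - (1/2)·w_xxx² + (1/2)·σ·w_y²`. -/
noncomputable def Lag (β σ : ℝ) (w : ℝ → ℝ → ℝ → ℝ) : ℝ → ℝ → ℝ → ℝ :=
  fun t x y =>
    - (1 / 2) * pt w t x y * px w t x y - (1 / 6) * (px w t x y) ^ 3
      + (1 / 2) * β * (px (px w) t x y) ^ 2
      - (1 / 2) * (px (px (px w)) t x y) ^ 2
      + (1 / 2) * σ * (py w t x y) ^ 2

open MeasureTheory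

/-!
The density `Lag` is a smooth function `L` of finitely many iterated directional derivatives of
`w`, its jet. On compact sets the derivative of `L` is bounded, so one may differentiate under the
integral, and the first variation in the direction `φ` is `∫ ∑ i, ∂L/∂p_i (jet v) * D_i φ`. As `φ`
has compact support, integrating by parts moves each `D_i`, of order `k i`, onto its coefficient
with the sign `(-1) ^ k i`. For the jet coordinates `(w_t, w_x, w_y, w_xx, w_xxx)` the coefficients
are `-w_x / 2`, `-(w_t + w_x ^ 2) / 2`, `σ w_y`, `β w_xx` and `-w_xxx`, and the resulting
Euler–Lagrange expression is `KKP`, the two mixed terms combining because `w_xt = w_tx`.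
-/

open Function Set

section FirstVariation

variable {X F G : Type*} [TopologicalSpace X] [MeasurableSpace X] [OpensMeasurableSpace X]
  {μ : Measure X} [IsFiniteMeasureOnCompacts μ]
  [NormedAddCommGroup F] [NormedSpace ℝ F] [NormedAddCommGroup G] [NormedSpace ℝ G]

theorem hasDerivAt_integral_comp_add_smul_sub {L : F → G} {J H : X → F} (hL : ContDiff ℝ 1 L)
    (hJ : Continuous J) (hH : Continuous H) (hHc : HasCompactSupport H) :
    HasDerivAt (fun ε : ℝ => ∫ x, (L (J x + ε • H x) - L (J x)) ∂μ)
      (∫ x, fderiv ℝ L (J x) (H x) ∂μ) 0 := by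
  have : Continuous (fderiv ℝ L) := hL.continuous_fderiv one_ne_zero
  have hderiv (ε : ℝ) (x : X) :
      HasDerivAt (fun ε : ℝ => L (J x + ε • H x) - L (J x))
        (fderiv ℝ L (J x + ε • H x) (H x)) ε := by
    have hline : HasDerivAt (fun ε : ℝ => J x + ε • H x) (H x) ε := by
      simpa using ((hasDerivAt_id ε).smul_const (H x)).const_add (J x)
    exact ((hL.differentiable one_ne_zero _).hasFDerivAt.comp_hasDerivAt ε hline).sub_const _
  have hint (ε : ℝ) : Integrable (fun x => L (J x + ε • H x) - L (J x)) μ := by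
    refine Continuous.integrable_of_hasCompactSupport ?_ (hHc.mono fun x hx => ?_)
    · exact (hL.continuous.comp (by fun_prop)).sub (hL.continuous.comp hJ)
    · contrapose! hx
      simp [notMem_support.1 hx]
  have hint' : Integrable (fun x => fderiv ℝ L (J x + (0 : ℝ) • H x) (H x)) μ := by
    refine Continuous.integrable_of_hasCompactSupport (by fun_prop) (hHc.mono fun x hx => ?_)
    contrapose! hx
    simp [notMem_support.1 hx]
  obtain ⟨C, hC⟩ : ∃ C, ∀ p ∈ Icc (-1 : ℝ) 1 ×ˢ tsupport H,
      ‖fderiv ℝ L (J p.2 + p.1 • H p.2) (H p.2)‖ ≤ C :=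
    (isCompact_Icc.prod hHc).exists_bound_of_continuousOn (by fun_prop)
  have hbound (x : X) (ε : ℝ) (hε : ε ∈ Icc (-1 : ℝ) 1) :
      ‖fderiv ℝ L (J x + ε • H x) (H x)‖ ≤ (tsupport H).indicator (fun _ => C) x := by
    by_cases hx : x ∈ tsupport H
    · simpa [hx] using hC (ε, x) ⟨hε, hx⟩
    · simp [hx, image_eq_zero_of_notMem_tsupport hx]
  have hbound_int : Integrable ((tsupport H).indicator fun _ => C) μ :=
    (integrable_indicator_iff (isClosed_tsupport H).measurableSet).2
      (integrableOn_const hHc.measure_lt_top.ne)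
  simpa using (hasDerivAt_integral_of_dominated_loc_of_deriv_le
    (Icc_mem_nhds (by norm_num) (by norm_num)) (.of_forall fun ε => (hint ε).aestronglyMeasurable)
    (hint 0) hint'.aestronglyMeasurable (.of_forall hbound) hbound_int
    (.of_forall fun x ε _ => hderiv ε x)).2

end FirstVariation

/-- The directional derivative along `e` as an operator on functions, so that it can be iterated;
like `lineDeriv`, it takes the junk value `0` where the derivative does not exist. -/
noncomputable def dirDeriv {E F : Type*} [AddCommGroup E] [Module ℝ E] [NormedAddCommGroup F]
    [NormedSpace ℝ F] (e : E) (f : E → F) : E → F :=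
  fun q => lineDeriv ℝ f q e

section DirDeriv

variable {E F : Type*} [NormedAddCommGroup E] [NormedSpace ℝ E]
  [NormedAddCommGroup F] [NormedSpace ℝ F] (e : E) {f g : E → F}

theorem hasLineDerivAt_dirDeriv (hf : Differentiable ℝ f) (q : E) :
    HasLineDerivAt ℝ f (dirDeriv e f q) q e :=
  (hf q).lineDifferentiableAt.hasLineDerivAt

theorem dirDeriv_eq_fderiv (hf : Differentiable ℝ f) :
    dirDeriv e f = fun q => fderiv ℝ f q e :=
  funext fun q => (hf q).lineDeriv_eq_fderiv

theorem dirDeriv_add (hf : Differentiable ℝ f) (hg : Differentiable ℝ g) :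
    dirDeriv e (f + g) = dirDeriv e f + dirDeriv e g :=
  funext fun q => (HasDerivAt.add (hasLineDerivAt_dirDeriv e hf q)
    (hasLineDerivAt_dirDeriv e hg q)).deriv

theorem dirDeriv_const_smul (c : ℝ) (f : E → F) : dirDeriv e (c • f) = c • dirDeriv e f :=
  funext fun _ => deriv_fun_const_smul_field c _

theorem dirDeriv_pow {f : E → ℝ} (hf : Differentiable ℝ f) (n : ℕ) :
    dirDeriv e (f ^ n) = fun q => n * f q ^ (n - 1) * dirDeriv e f q :=
  funext fun q => (HasDerivAt.pow (hasLineDerivAt_dirDeriv e hf q) n).deriv.trans (by simp)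

theorem tsupport_dirDeriv_subset (f : E → F) : tsupport (dirDeriv e f) ⊆ tsupport f := by
  refine closure_minimal (fun q hq => ?_) (isClosed_tsupport f)
  contrapose! hq
  rw [notMem_tsupport_iff_eventuallyEq] at hq
  simpa [dirDeriv, lineDeriv] using hq.lineDeriv_eq (v := e)

theorem contDiff_dirDeriv {m n : WithTop ℕ∞} (hf : ContDiff ℝ n f) (hmn : m + 1 ≤ n) :
    ContDiff ℝ m (dirDeriv e f) := by
  rw [dirDeriv_eq_fderiv e (hf.differentiable (by rintro rfl; simp at hmn))]
  exact (hf.fderiv_right hmn).clm_apply contDiff_const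

theorem dirDeriv_comm (hf : ContDiff ℝ 2 f) (d : E) :
    dirDeriv d (dirDeriv e f) = dirDeriv e (dirDeriv d f) := by
  have hf₁ : Differentiable ℝ f := hf.differentiable two_ne_zero
  have hf₂ : Differentiable ℝ (fderiv ℝ f) :=
    (hf.fderiv_right (m := 1) (by norm_num)).differentiable one_ne_zero
  have dirDeriv_dirDeriv (a b : E) :
      dirDeriv a (dirDeriv b f) = fun q => fderiv ℝ (fderiv ℝ f) q a b := by
    rw [dirDeriv_eq_fderiv b hf₁, dirDeriv_eq_fderiv a (by fun_prop)]
    funext q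
    simp [fderiv_clm_apply (hf₂ q) (differentiableAt_const b)]
  rw [dirDeriv_dirDeriv, dirDeriv_dirDeriv]
  funext q
  exact (hf.contDiffAt.isSymmSndFDerivAt (by simp)).eq d e

theorem contDiff_iterate_dirDeriv {m n : WithTop ℕ∞} {k : ℕ} (hf : ContDiff ℝ n f)
    (hkn : m + k ≤ n) : ContDiff ℝ m ((dirDeriv e)^[k] f) := by
  induction k generalizing m with
  | zero => exact hf.of_le (by simpa using hkn)
  | succ k ih =>
    rw [iterate_succ_apply']
    exact contDiff_dirDeriv e (ih (by rwa [add_assoc, add_comm 1, ← Nat.cast_succ])) le_rfl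

theorem continuous_iterate_dirDeriv {k : ℕ} (hf : ContDiff ℝ k f) :
    Continuous ((dirDeriv e)^[k] f) :=
  (contDiff_iterate_dirDeriv (m := 0) e hf (by simp)).continuous

theorem iterate_dirDeriv_const_smul (k : ℕ) (c : ℝ) (f : E → F) :
    (dirDeriv e)^[k] (c • f) = c • (dirDeriv e)^[k] f :=
  Function.Commute.iterate_left (g := (c • ·)) (dirDeriv_const_smul e c) k f

theorem iterate_dirDeriv_add {k : ℕ} (hf : ContDiff ℝ k f) (hg : ContDiff ℝ k g) :
    (dirDeriv e)^[k] (f + g) = (dirDeriv e)^[k] f + (dirDeriv e)^[k] g := by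
  induction k generalizing f g with
  | zero => rfl
  | succ k ih =>
    have hk : ((k : WithTop ℕ∞) + 1) ≤ (k + 1 : ℕ) := by simp
    simp only [iterate_succ_apply]
    rw [dirDeriv_add e (hf.differentiable (by simp)) (hg.differentiable (by simp)),
      ih (contDiff_dirDeriv e hf hk) (contDiff_dirDeriv e hg hk)]

theorem tsupport_iterate_dirDeriv_subset (k : ℕ) (f : E → F) :
    tsupport ((dirDeriv e)^[k] f) ⊆ tsupport f := by
  induction k with
  | zero => exact Subset.rfl
  | succ k ih =>
    rw [iterate_succ_apply']
    exact (tsupport_dirDeriv_subset e _).trans ih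

theorem hasCompactSupport_iterate_dirDeriv (k : ℕ) (hf : HasCompactSupport f) :
    HasCompactSupport ((dirDeriv e)^[k] f) :=
  hf.of_isClosed_subset (isClosed_tsupport _) (tsupport_iterate_dirDeriv_subset e k f)

end DirDeriv

section IntegrationByParts

variable {E : Type*} [NormedAddCommGroup E] [NormedSpace ℝ E] [FiniteDimensional ℝ E]
  [MeasurableSpace E] [BorelSpace E] {μ : Measure E} [μ.IsAddHaarMeasure] {f g : E → ℝ}

theorem integral_mul_dirDeriv (e : E) (hf : ContDiff ℝ 1 f) (hg : ContDiff ℝ 1 g)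
    (hgc : HasCompactSupport g) :
    ∫ q, f q * dirDeriv e g q ∂μ = -∫ q, dirDeriv e f q * g q ∂μ := by
  have hf₀ := hf.continuous
  have hg₀ := hg.continuous
  have hf' : Continuous (dirDeriv e f) := continuous_iterate_dirDeriv (k := 1) e hf
  have hg' : Continuous (dirDeriv e g) := continuous_iterate_dirDeriv (k := 1) e hg
  have hgc' : HasCompactSupport (dirDeriv e g) := hasCompactSupport_iterate_dirDeriv e 1 hgc
  exact integral_bilinear_hasLineDerivAt_right_eq_neg_left_of_integrable
    (B := ContinuousLinearMap.mul ℝ ℝ)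
    ((hf'.mul hg₀).integrable_of_hasCompactSupport hgc.mul_left)
    ((hf₀.mul hg').integrable_of_hasCompactSupport hgc'.mul_left)
    ((hf₀.mul hg₀).integrable_of_hasCompactSupport hgc.mul_left)
    (fun q _ => hasLineDerivAt_dirDeriv e (hf.differentiable one_ne_zero) q)
    (fun q _ => hasLineDerivAt_dirDeriv e (hg.differentiable one_ne_zero) q)

theorem integral_mul_iterate_dirDeriv (e : E) {k : ℕ} (hf : ContDiff ℝ k f)
    (hg : ContDiff ℝ k g) (hgc : HasCompactSupport g) :
    ∫ q, f q * (dirDeriv e)^[k] g q ∂μ = (-1) ^ k * ∫ q, (dirDeriv e)^[k] f q * g q ∂μ := by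
  induction k generalizing f with
  | zero => simp
  | succ k ih =>
    have hg' : ContDiff ℝ 1 ((dirDeriv e)^[k] g) :=
      contDiff_iterate_dirDeriv e hg (by simp [add_comm])
    calc ∫ q, f q * (dirDeriv e)^[k + 1] g q ∂μ
        = ∫ q, f q * dirDeriv e ((dirDeriv e)^[k] g) q ∂μ := by rw [iterate_succ_apply']
      _ = -∫ q, dirDeriv e f q * (dirDeriv e)^[k] g q ∂μ :=
          integral_mul_dirDeriv e (hf.of_le (by simp)) hg'
            (hasCompactSupport_iterate_dirDeriv e k hgc)
      _ = (-1) ^ (k + 1) * ∫ q, (dirDeriv e)^[k + 1] f q * g q ∂μ := by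
          rw [ih (contDiff_dirDeriv e hf (by simp)) (hg.of_le (by simp)), iterate_succ_apply]
          ring

end IntegrationByParts

/-- The jet of `f` with coordinates indexed by `ι`: the `i`-th one is the derivative of `f` of
order `k i` along `e i`. Only such unmixed derivatives occur. -/
noncomputable def dirJet {ι E : Type*} [AddCommGroup E] [Module ℝ E] (e : ι → E) (k : ι → ℕ)
    (f : E → ℝ) : E → ι → ℝ :=
  fun q i => (dirDeriv (e i))^[k i] f q

/-- The Euler–Lagrange expression `∑ i, (-1) ^ k i * D_i (∂L/∂p_i)` of the Lagrangian density
`L (dirJet e k f)`, where `D_i` is the derivative of order `k i` along `e i`. -/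
noncomputable def eulerOperator {ι E : Type*} [Fintype ι] [DecidableEq ι] [AddCommGroup E]
    [Module ℝ E] (L : (ι → ℝ) → ℝ) (e : ι → E) (k : ι → ℕ) (f : E → ℝ) : E → ℝ :=
  fun q => ∑ i, (-1) ^ k i *
    (dirDeriv (e i))^[k i] (fun q' => dirDeriv (Pi.single i 1) L (dirJet e k f q')) q

section EulerLagrange

variable {ι E : Type*} [NormedAddCommGroup E] [NormedSpace ℝ E]
  {e : ι → E} {k : ι → ℕ} {f g : E → ℝ}

theorem dirJet_add_smul {m : ℕ} (hf : ContDiff ℝ m f) (hg : ContDiff ℝ m g) (hk : ∀ i, k i ≤ m)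
    (ε : ℝ) : dirJet e k (f + ε • g) = dirJet e k f + ε • dirJet e k g := by
  funext q i
  have hki : (k i : WithTop ℕ∞) ≤ m := by exact_mod_cast hk i
  have hεg : ContDiff ℝ (k i) (ε • g) := (hg.of_le hki).const_smul ε
  calc (dirDeriv (e i))^[k i] (f + ε • g) q
      = ((dirDeriv (e i))^[k i] f + ε • (dirDeriv (e i))^[k i] g) q := by
        rw [iterate_dirDeriv_add (e i) (hf.of_le hki) hεg, iterate_dirDeriv_const_smul]
    _ = (dirJet e k f + ε • dirJet e k g) q i := rfl

theorem hasCompactSupport_dirJet (hf : HasCompactSupport f) : HasCompactSupport (dirJet e k f) := by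
  refine HasCompactSupport.intro hf fun q hq => funext fun i => ?_
  have hqi : q ∉ tsupport ((dirDeriv (e i))^[k i] f) :=
    fun h => hq (tsupport_iterate_dirDeriv_subset _ _ _ h)
  exact image_eq_zero_of_notMem_tsupport (f := (dirDeriv (e i))^[k i] f) hqi

variable [Fintype ι]

theorem contDiff_dirJet {m n : ℕ} (hf : ContDiff ℝ (m + n : ℕ) f) (hk : ∀ i, k i ≤ n) :
    ContDiff ℝ m (dirJet e k f) :=
  contDiff_pi.2 fun i => contDiff_iterate_dirDeriv (e i) hf (by exact_mod_cast by grind)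

theorem fderiv_apply_eq_sum_dirDeriv [DecidableEq ι] {L : (ι → ℝ) → ℝ} (hL : Differentiable ℝ L)
    (p h : ι → ℝ) : fderiv ℝ L p h = ∑ i, dirDeriv (Pi.single i 1) L p * h i := by
  conv_lhs => rw [← Finset.univ_sum_single h, map_sum]
  refine Finset.sum_congr rfl fun i _ => ?_
  have hsingle : Pi.single i (h i) = h i • (Pi.single i 1 : ι → ℝ) := by simp [← Pi.single_smul]
  rw [hsingle, map_smul, smul_eq_mul, mul_comm, dirDeriv_eq_fderiv _ hL]

variable [FiniteDimensional ℝ E] [MeasurableSpace E] [BorelSpace E] {μ : Measure E}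
  [μ.IsAddHaarMeasure] [DecidableEq ι] {L : (ι → ℝ) → ℝ}

theorem integral_fderiv_dirJet {m : ℕ} (hk : ∀ i, k i ≤ m) (hL : ContDiff ℝ (m + 1 : ℕ) L)
    (hf : ContDiff ℝ (m + m : ℕ) f) (hg : ContDiff ℝ m g) (hgc : HasCompactSupport g) :
    ∫ q, fderiv ℝ L (dirJet e k f q) (dirJet e k g q) ∂μ =
      ∫ q, eulerOperator L e k f q * g q ∂μ := by
  let p (i : ι) (q : E) : ℝ := dirDeriv (Pi.single i 1) L (dirJet e k f q)
  have hki (i : ι) : (k i : WithTop ℕ∞) ≤ m := by exact_mod_cast hk i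
  have hp (i : ι) : ContDiff ℝ (k i) (p i) :=
    ((contDiff_dirDeriv _ hL (by simp)).comp (contDiff_dirJet hf hk)).of_le (hki i)
  have hgi (i : ι) : ContDiff ℝ (k i) g := hg.of_le (hki i)
  calc ∫ q, fderiv ℝ L (dirJet e k f q) (dirJet e k g q) ∂μ
      = ∫ q, ∑ i, p i q * (dirDeriv (e i))^[k i] g q ∂μ := by
        simp only [fderiv_apply_eq_sum_dirDeriv (hL.differentiable (by simp)), p, dirJet]
    _ = ∑ i, ∫ q, p i q * (dirDeriv (e i))^[k i] g q ∂μ :=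
        integral_finsetSum _ fun i _ => ((hp i).continuous.mul
          (continuous_iterate_dirDeriv _ (hgi i))).integrable_of_hasCompactSupport
          (hasCompactSupport_iterate_dirDeriv _ _ hgc).mul_left
    _ = ∑ i, ∫ q, (-1) ^ k i * (dirDeriv (e i))^[k i] (p i) q * g q ∂μ :=
        Finset.sum_congr rfl fun i _ => by
          simp only [mul_assoc, integral_const_mul]
          exact integral_mul_iterate_dirDeriv _ (hp i) (hgi i) hgc
    _ = ∫ q, ∑ i, (-1) ^ k i * (dirDeriv (e i))^[k i] (p i) q * g q ∂μ :=
        (integral_finsetSum _ fun i _ => ((continuous_const.mul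
          (continuous_iterate_dirDeriv _ (hp i))).mul
          hg.continuous).integrable_of_hasCompactSupport hgc.mul_left).symm
    _ = ∫ q, eulerOperator L e k f q * g q ∂μ := by
        simp only [eulerOperator, Finset.sum_mul, p]

theorem hasDerivAt_integral_comp_dirJet_sub {m : ℕ} (hk : ∀ i, k i ≤ m)
    (hL : ContDiff ℝ (m + 1 : ℕ) L) (hf : ContDiff ℝ (m + m : ℕ) f) (hg : ContDiff ℝ m g)
    (hgc : HasCompactSupport g) :
    HasDerivAt
      (fun ε : ℝ => ∫ q, (L (dirJet e k (f + ε • g) q) - L (dirJet e k f q)) ∂μ)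
      (∫ q, eulerOperator L e k f q * g q ∂μ) 0 := by
  have hfm : ContDiff ℝ m f := hf.of_le (by simp)
  have hJ {u : E → ℝ} (hu : ContDiff ℝ m u) : Continuous (dirJet e k u) :=
    (contDiff_dirJet (m := 0) (by simpa using hu) hk).continuous
  rw [← integral_fderiv_dirJet hk hL hf hg hgc]
  simp only [dirJet_add_smul hfm hg hk]
  exact hasDerivAt_integral_comp_add_smul_sub (hL.of_le (by simp)) (hJ hfm) (hJ hg)
    (hasCompactSupport_dirJet hgc)

end EulerLagrange

local notation "∂ₜ" => dirDeriv (E := ℝ × ℝ × ℝ) (F := ℝ) (1, 0, 0)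
local notation "∂ₓ" => dirDeriv (E := ℝ × ℝ × ℝ) (F := ℝ) (0, 1, 0)
local notation "∂ᵧ" => dirDeriv (E := ℝ × ℝ × ℝ) (F := ℝ) (0, 0, 1)

section Uncurry

variable (w : ℝ → ℝ → ℝ → ℝ)

theorem uncurry_pt_s10 : ↿(pt w) = ∂ₜ ↿w := by
  funext ⟨t, x, y⟩
  simpa [dirDeriv, lineDeriv, HasUncurry.uncurry, pt] using
    (deriv_comp_const_add (fun s => w s x y) t 0).symm

theorem uncurry_px_s10 : ↿(px w) = ∂ₓ ↿w := by
  funext ⟨t, x, y⟩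
  simpa [dirDeriv, lineDeriv, HasUncurry.uncurry, px] using
    (deriv_comp_const_add (fun s => w t s y) x 0).symm

theorem uncurry_py_s10 : ↿(py w) = ∂ᵧ ↿w := by
  funext ⟨t, x, y⟩
  simpa [dirDeriv, lineDeriv, HasUncurry.uncurry, py] using
    (deriv_comp_const_add (fun s => w t x s) y 0).symm

end Uncurry

/-- The Lagrangian `Lag` as a function of the jet coordinates `(w_t, w_x, w_y, w_xx, w_xxx)`. -/
noncomputable def kkpLagrangian (β σ : ℝ) (p : Fin 5 → ℝ) : ℝ :=
  -(1 / 2) * p 0 * p 1 - (1 / 6) * p 1 ^ 3 + (1 / 2) * β * p 3 ^ 2 - (1 / 2) * p 4 ^ 2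
    + (1 / 2) * σ * p 2 ^ 2

/-- The directions of the jet coordinates `(w_t, w_x, w_y, w_xx, w_xxx)`. -/
def kkpDirection : Fin 5 → ℝ × ℝ × ℝ :=
  ![(1, 0, 0), (0, 1, 0), (0, 0, 1), (0, 1, 0), (0, 1, 0)]

/-- The orders of the jet coordinates `(w_t, w_x, w_y, w_xx, w_xxx)`. -/
def kkpOrder : Fin 5 → ℕ :=
  ![1, 1, 1, 2, 3]

theorem kkpOrder_le (i : Fin 5) : kkpOrder i ≤ 3 := by
  fin_cases i <;> simp [kkpOrder]

theorem contDiff_kkpLagrangian (β σ : ℝ) {n : WithTop ℕ∞} : ContDiff ℝ n (kkpLagrangian β σ) := by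
  unfold kkpLagrangian
  fun_prop

theorem dirDeriv_kkpLagrangian (β σ : ℝ) (h p : Fin 5 → ℝ) :
    dirDeriv h (kkpLagrangian β σ) p =
      -(1 / 2) * p 1 * h 0 + -(1 / 2) * (p 0 + p 1 ^ 2) * h 1 + σ * p 2 * h 2 + β * p 3 * h 3
        + -p 4 * h 4 := by
  have hp (j : Fin 5) : HasDerivAt (fun s : ℝ => p j + s * h j) (h j) 0 := by
    simpa using ((hasDerivAt_id (0 : ℝ)).mul_const (h j)).const_add (p j)
  have hL := (((((hp 0).const_mul (-(1 / 2))).mul (hp 1)).sub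
    (((hp 1).pow 3).const_mul (1 / 6))).add (((hp 3).pow 2).const_mul ((1 / 2) * β))).sub
    (((hp 4).pow 2).const_mul (1 / 2)) |>.add (((hp 2).pow 2).const_mul ((1 / 2) * σ))
  refine hL.deriv.trans ?_
  simp only [zero_mul, add_zero, Nat.cast_ofNat, Nat.add_one_sub_one, pow_one]
  ring

theorem dirDeriv_single_kkpLagrangian (β σ : ℝ) (i : Fin 5) (p : Fin 5 → ℝ) :
    dirDeriv (Pi.single i 1) (kkpLagrangian β σ) p =
      ![-(1 / 2) * p 1, -(1 / 2) * (p 0 + p 1 ^ 2), σ * p 2, β * p 3, -p 4] i := by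
  rw [dirDeriv_kkpLagrangian]
  fin_cases i <;> simp

theorem eulerOperator_kkpLagrangian (β σ : ℝ) {u : ℝ × ℝ × ℝ → ℝ} (hu : ContDiff ℝ 2 u) :
    eulerOperator (kkpLagrangian β σ) kkpDirection kkpOrder u = fun q =>
      ∂ₓ (∂ₜ u) q + ∂ₓ u q * ∂ₓ^[2] u q + β * ∂ₓ^[4] u q + ∂ₓ^[6] u q - σ * ∂ᵧ^[2] u q := by
  have hut : Differentiable ℝ (∂ₜ u) :=
    (contDiff_dirDeriv (m := 1) _ hu (by norm_num)).differentiable one_ne_zero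
  have hux : Differentiable ℝ (∂ₓ u) :=
    (contDiff_dirDeriv (m := 1) _ hu (by norm_num)).differentiable one_ne_zero
  have ht : ∂ₜ (-(1 / 2 : ℝ) • ∂ₓ u) = -(1 / 2 : ℝ) • ∂ₓ (∂ₜ u) := by
    rw [dirDeriv_const_smul, dirDeriv_comm _ hu]
  have hx : ∂ₓ (-(1 / 2 : ℝ) • (∂ₜ u + ∂ₓ u ^ 2)) =
      -(1 / 2 : ℝ) • ∂ₓ (∂ₜ u) - ∂ₓ u * ∂ₓ^[2] u := by
    rw [dirDeriv_const_smul, dirDeriv_add _ hut (hux.pow 2), dirDeriv_pow _ hux]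
    funext q
    simp only [Nat.cast_ofNat, Nat.add_one_sub_one, pow_one, Pi.smul_apply, Pi.add_apply,
      smul_eq_mul, iterate_succ_apply, iterate_zero_apply, Pi.sub_apply, Pi.mul_apply]
    ring
  have hy : ∂ᵧ (σ • ∂ᵧ u) = σ • ∂ᵧ^[2] u := dirDeriv_const_smul ..
  have hxx : ∂ₓ^[2] (β • ∂ₓ^[2] u) = β • ∂ₓ^[4] u := iterate_dirDeriv_const_smul ..
  have hxxx : ∂ₓ^[3] (-∂ₓ^[3] u) = -∂ₓ^[6] u := by
    simpa using iterate_dirDeriv_const_smul (0, 1, 0) 3 (-1) (∂ₓ^[3] u)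
  funext q
  calc eulerOperator (kkpLagrangian β σ) kkpDirection kkpOrder u q
      = (-1) ^ 1 * ∂ₜ (-(1 / 2 : ℝ) • ∂ₓ u) q
        + (-1) ^ 1 * ∂ₓ (-(1 / 2 : ℝ) • (∂ₜ u + ∂ₓ u ^ 2)) q + (-1) ^ 1 * ∂ᵧ (σ • ∂ᵧ u) q
        + (-1) ^ 2 * ∂ₓ^[2] (β • ∂ₓ^[2] u) q + (-1) ^ 3 * ∂ₓ^[3] (-∂ₓ^[3] u) q := by
        simp only [eulerOperator, Fin.sum_univ_five, dirDeriv_single_kkpLagrangian]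
        rfl
    _ = ∂ₓ (∂ₜ u) q + ∂ₓ u q * ∂ₓ^[2] u q + β * ∂ₓ^[4] u q + ∂ₓ^[6] u q - σ * ∂ᵧ^[2] u q := by
        rw [ht, hx, hy, hxx, hxxx]
        simp only [Pi.smul_apply, smul_eq_mul, Pi.sub_apply, Pi.neg_apply, Pi.mul_apply]
        ring

theorem uncurry_Lag (β σ : ℝ) (w : ℝ → ℝ → ℝ → ℝ) :
    ↿(Lag β σ w) = fun q => kkpLagrangian β σ (dirJet kkpDirection kkpOrder ↿w q) := by
  funext q
  change -(1 / 2) * ↿(pt w) q * ↿(px w) q - (1 / 6) * ↿(px w) q ^ 3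
      + (1 / 2) * β * ↿(px (px w)) q ^ 2 - (1 / 2) * ↿(px (px (px w))) q ^ 2
      + (1 / 2) * σ * ↿(py w) q ^ 2 = _
  simp only [uncurry_pt_s10, uncurry_px_s10, uncurry_py_s10]
  rfl

theorem uncurry_KKP (β σ : ℝ) {w : ℝ → ℝ → ℝ → ℝ} (hw : ContDiff ℝ 2 ↿w) :
    ↿(KKP β σ w) = eulerOperator (kkpLagrangian β σ) kkpDirection kkpOrder ↿w := by
  rw [eulerOperator_kkpLagrangian β σ hw]
  funext q
  change ↿(px (pt w)) q + ↿(px w) q * ↿(px (px w)) q + β * ↿(px (px (px (px w)))) q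
      + ↿(px (px (px (px (px (px w)))))) q - σ * ↿(py (py w)) q = _
  simp only [uncurry_pt_s10, uncurry_px_s10, uncurry_py_s10]
  rfl

theorem euler_lagrange_KKP_general (β σ : ℝ) (v φ : ℝ → ℝ → ℝ → ℝ)
    (hv : ContDiff ℝ 6 (fun q : ℝ × ℝ × ℝ => v q.1 q.2.1 q.2.2))
    (hφ : ContDiff ℝ 3 (fun q : ℝ × ℝ × ℝ => φ q.1 q.2.1 q.2.2))
    (hφc : HasCompactSupport (fun q : ℝ × ℝ × ℝ => φ q.1 q.2.1 q.2.2)) :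
    HasDerivAt
      (fun ε : ℝ =>
        ∫ q : ℝ × ℝ × ℝ,
          (Lag β σ (fun t x y => v t x y + ε * φ t x y) q.1 q.2.1 q.2.2
            - Lag β σ v q.1 q.2.1 q.2.2))
      (∫ q : ℝ × ℝ × ℝ, KKP β σ v q.1 q.2.1 q.2.2 * φ q.1 q.2.1 q.2.2)
      0 := by
  have : (volume : Measure (ℝ × ℝ)).IsAddHaarMeasure := Measure.prod.instIsAddHaarMeasure ..
  have : (volume : Measure (ℝ × ℝ × ℝ)).IsAddHaarMeasure := Measure.prod.instIsAddHaarMeasure ..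
  change HasDerivAt (fun ε : ℝ => ∫ q, (↿(Lag β σ fun t x y => v t x y + ε * φ t x y) q
    - ↿(Lag β σ v) q)) (∫ q, ↿(KKP β σ v) q * ↿φ q) 0
  simp only [uncurry_Lag, uncurry_KKP β σ (hv.of_le (by norm_num))]
  exact hasDerivAt_integral_comp_dirJet_sub (m := 3) kkpOrder_le (contDiff_kkpLagrangian β σ)
    hv hφ hφc

/-- The potential Kawahara–KP equation is the Euler–Lagrange equation of the
Lagrangian `Lag`: the first variation of `∫ (L[v+εφ] - L[v])` at `ε = 0` equals
`∫ (v_tx + v_x·v_xx + β·v_xxxx + v_xxxxxx - σ·v_yy)·φ`. -/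
theorem euler_lagrange_KKP (β σ : ℝ) (hβ : β ≠ 0) (hσ : σ = 1 ∨ σ = -1)
    (v φ : ℝ → ℝ → ℝ → ℝ)
    (hv : ContDiff ℝ (⊤ : ℕ∞) (fun q : ℝ × ℝ × ℝ => v q.1 q.2.1 q.2.2))
    (hφ : ContDiff ℝ (⊤ : ℕ∞) (fun q : ℝ × ℝ × ℝ => φ q.1 q.2.1 q.2.2))
    (hφc : HasCompactSupport (fun q : ℝ × ℝ × ℝ => φ q.1 q.2.1 q.2.2)) :
    HasDerivAt
      (fun ε : ℝ =>
        ∫ q : ℝ × ℝ × ℝ,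
          (Lag β σ (fun t x y => v t x y + ε * φ t x y) q.1 q.2.1 q.2.2
            - Lag β σ v q.1 q.2.1 q.2.2))
      (∫ q : ℝ × ℝ × ℝ, KKP β σ v q.1 q.2.1 q.2.2 * φ q.1 q.2.1 q.2.2)
      0 := by
  exact euler_lagrange_KKP_general β σ v φ (contDiff_infty.1 hv 6) (contDiff_infty.1 hφ 3) hφc
end

section
/- Zero-background solitary wave of the Kawahara equation: let β < 0 and set c := -(36/169)·β². Then the function u(t,x) := -(105/169)·β²·sech( √(-β/52)·(x - c·t) )⁴ is a smooth solution of the Kawahara equation u_t + u·u_x + β·u_xxx + u_xxxxx = 0 at every point (t,x) ∈ ℝ². -/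
/-- Partial derivative in `t` of a function `u (t, x)` given in curried form. -/
noncomputable def pt2 (u : ℝ → ℝ → ℝ) : ℝ → ℝ → ℝ :=
  fun t x => deriv (fun s => u s x) t

/-- Partial derivative in `x` of a function `u (t, x)` given in curried form. -/
noncomputable def px2 (u : ℝ → ℝ → ℝ) : ℝ → ℝ → ℝ :=
  fun t x => deriv (fun s => u t s) x

/-! A travelling wave `f (x - c * t)` turns the Kawahara equation into an ordinary differential
equation which integrates once to `f⁽⁴⁾ + β * f⁽²⁾ + f ^ 2 / 2 - c * f = const`. Since
`(sech ^ n)⁽²⁾ = n ^ 2 * sech ^ n - n * (n + 1) * sech ^ (n + 2)`, the left side for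
`f = A * sech (k * z) ^ 4` is a combination of `sech ^ 4`, `sech ^ 6` and `sech ^ 8`, whose
coefficients vanish when `c = 256 * k ^ 4 + 16 * β * k ^ 2`, `β = -52 * k ^ 2` and
`A = -1680 * k ^ 4`. -/

/-- The wave with profile `f` moving at speed `c`, as a curried function of `(t, x)`. -/
def travellingWave (c : ℝ) (f : ℝ → ℝ) : ℝ → ℝ → ℝ :=
  fun t x => f (x - c * t)

theorem contDiff_travellingWave {c : ℝ} {f : ℝ → ℝ} {n : WithTop ℕ∞} (hf : ContDiff ℝ n f) :
    ContDiff ℝ n (fun q : ℝ × ℝ => travellingWave c f q.1 q.2) :=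
  hf.comp (by fun_prop)

theorem px2_travellingWave (c : ℝ) (f : ℝ → ℝ) :
    px2 (travellingWave c f) = travellingWave c (deriv f) := by
  funext t x
  exact deriv_comp_sub_const f (c * t) x

theorem iterate_px2_travellingWave (c : ℝ) (f : ℝ → ℝ) (n : ℕ) :
    px2^[n] (travellingWave c f) = travellingWave c (iteratedDeriv n f) := by
  have hsemi : Function.Semiconj (travellingWave c) deriv px2 := fun g =>
    (px2_travellingWave c g).symm
  rw [iteratedDeriv_eq_iterate]
  exact (hsemi.iterate_right n f).symm

theorem pt2_travellingWave {c : ℝ} {f : ℝ → ℝ} (hf : Differentiable ℝ f) (t x : ℝ) :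
    pt2 (travellingWave c f) t x = -c * deriv f (x - c * t) := by
  have hphase : HasDerivAt (fun s : ℝ => x - c * s) (-c) t := by
    simpa using ((hasDerivAt_id t).const_mul c).const_sub x
  rw [mul_comm]
  exact ((hf _).hasDerivAt.comp t hphase).deriv

/-- `u` satisfies the Kawahara equation `u_t + u * u_x + β * u_xxx + u_xxxxx = 0` pointwise.
The definition does not require `u` to be smooth: `deriv` is `0` where a partial derivative fails to
exist. -/
def IsKawaharaSolution (β : ℝ) (u : ℝ → ℝ → ℝ) : Prop :=
  ∀ t x : ℝ,
    pt2 u t x + u t x * px2 u t x + β * px2 (px2 (px2 u)) t x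
      + px2 (px2 (px2 (px2 (px2 u)))) t x = 0

theorem isKawaharaSolution_travellingWave {β c K : ℝ} {f : ℝ → ℝ} (hf : ContDiff ℝ 5 f)
    (hprofile : ∀ z, iteratedDeriv 4 f z + β * iteratedDeriv 2 f z + f z ^ 2 / 2 - c * f z = K) :
    IsKawaharaSolution β (travellingWave c f) := by
  intro t x
  have hderiv (n : ℕ) (hn : n < 5) (z : ℝ) :
      HasDerivAt (iteratedDeriv n f) (iteratedDeriv (n + 1) f z) z := by
    rw [iteratedDeriv_succ]
    exact (hf.differentiable_iteratedDeriv n (by exact_mod_cast hn) z).hasDerivAt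
  have hf' (z : ℝ) : HasDerivAt f (deriv f z) z :=
    (hf.differentiable (by norm_num) z).hasDerivAt
  have hode (z : ℝ) : iteratedDeriv 5 f z + β * iteratedDeriv 3 f z + f z * deriv f z
      - c * deriv f z = 0 := by
    have hleft := ((((hderiv 4 (by norm_num) z).add ((hderiv 2 (by norm_num) z).const_mul β)).add
      (((hf' z).pow 2).div_const 2)).sub ((hf' z).const_mul c))
    have hconst := hleft.unique ((hasDerivAt_const z K).congr_of_eventuallyEq (.of_forall hprofile))
    linear_combination hconst
  change pt2 (travellingWave c f) t x + travellingWave c f t x * px2 (travellingWave c f) t x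
    + β * px2^[3] (travellingWave c f) t x + px2^[5] (travellingWave c f) t x = 0
  rw [pt2_travellingWave (hf.differentiable (by norm_num)), px2_travellingWave,
    iterate_px2_travellingWave, iterate_px2_travellingWave]
  simp only [travellingWave]
  linear_combination hode (x - c * t)

/-- The hyperbolic secant on `ℝ`. -/
noncomputable def sech (z : ℝ) : ℝ :=
  1 / Real.cosh z

theorem sech_mul_cosh (z : ℝ) : sech z * Real.cosh z = 1 :=
  one_div_mul_cancel (Real.cosh_pos z).ne'

theorem contDiff_sech {n : WithTop ℕ∞} : ContDiff ℝ n sech :=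
  contDiff_const.div Real.contDiff_cosh fun z => (Real.cosh_pos z).ne'

theorem hasDerivAt_sech (z : ℝ) : HasDerivAt sech (-(sech z ^ 2 * Real.sinh z)) z := by
  refine ((hasDerivAt_const z 1).div (Real.hasDerivAt_cosh z) (Real.cosh_pos z).ne').congr_deriv ?_
  simp only [sech]
  ring

theorem hasDerivAt_sech_pow (n : ℕ) (z : ℝ) :
    HasDerivAt (fun y => sech y ^ n) (-n * sech z ^ (n + 1) * Real.sinh z) z := by
  refine ((hasDerivAt_sech z).pow n).congr_deriv ?_
  cases n with
  | zero => simp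
  | succ m =>
    rw [Nat.add_sub_cancel]
    ring

theorem iteratedDeriv_two_sech_pow (n : ℕ) :
    iteratedDeriv 2 (fun z => sech z ^ n) =
      fun z => (n : ℝ) ^ 2 * sech z ^ n - n * (n + 1) * sech z ^ (n + 2) := by
  have hfirst : deriv (fun z => sech z ^ n) = fun z => -n * sech z ^ (n + 1) * Real.sinh z :=
    funext fun z => (hasDerivAt_sech_pow n z).deriv
  funext z
  have hsecond := ((hasDerivAt_sech_pow (n + 1) z).const_mul (-n : ℝ)).mul (Real.hasDerivAt_sinh z)
  rw [iteratedDeriv_succ, iteratedDeriv_one, hfirst]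
  refine hsecond.deriv.trans ?_
  have hsinh : sech z ^ 2 * Real.sinh z ^ 2 = 1 - sech z ^ 2 := by
    rw [Real.sinh_sq]
    linear_combination (sech z * Real.cosh z + 1) * sech_mul_cosh z
  push_cast
  linear_combination (n * (n + 1) * sech z ^ n) * hsinh - n * sech z ^ n * sech_mul_cosh z

theorem iteratedDeriv_four_sech_pow (n : ℕ) :
    iteratedDeriv 4 (fun z => sech z ^ n) = fun z =>
      (n : ℝ) ^ 4 * sech z ^ n - n * (n + 1) * (n ^ 2 + (n + 2) ^ 2) * sech z ^ (n + 2)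
        + n * (n + 1) * (n + 2) * (n + 3) * sech z ^ (n + 4) := by
  have hsmooth (m : ℕ) : ContDiff ℝ 2 (fun z => sech z ^ m) := contDiff_sech.pow m
  have hsplit : iteratedDeriv 4 (fun z => sech z ^ n) =
      iteratedDeriv 2 (iteratedDeriv 2 fun z => sech z ^ n) := by
    simp only [iteratedDeriv_eq_iterate, ← Function.iterate_add_apply]
  funext z
  rw [hsplit, iteratedDeriv_two_sech_pow, iteratedDeriv_fun_sub
    (contDiff_const.mul (hsmooth n)).contDiffAt (contDiff_const.mul (hsmooth (n + 2))).contDiffAt,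
    iteratedDeriv_const_mul_field, iteratedDeriv_const_mul_field,
    iteratedDeriv_two_sech_pow, iteratedDeriv_two_sech_pow]
  push_cast
  ring

/-- The profile `A * sech (k * z) ^ n` of a solitary wave with amplitude `A` and inverse width
`k`. -/
noncomputable def sechPowProfile (A k : ℝ) (n : ℕ) (z : ℝ) : ℝ :=
  A * sech (k * z) ^ n

theorem contDiff_sechPowProfile {m : WithTop ℕ∞} (A k : ℝ) (n : ℕ) :
    ContDiff ℝ m (sechPowProfile A k n) :=
  contDiff_const.mul ((contDiff_sech.comp (contDiff_const.mul contDiff_id)).pow n)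

theorem iteratedDeriv_sechPowProfile (A k : ℝ) (n m : ℕ) (z : ℝ) :
    iteratedDeriv m (sechPowProfile A k n) z =
      A * (k ^ m * iteratedDeriv m (fun y => sech y ^ n) (k * z)) := by
  have hsmooth : ContDiff ℝ m (fun y => sech y ^ n) := contDiff_sech.pow n
  unfold sechPowProfile
  rw [iteratedDeriv_const_mul_field, iteratedDeriv_comp_const_mul hsmooth]

theorem kawahara_ode_sechPowProfile_four (β c A k z : ℝ) :
    iteratedDeriv 4 (sechPowProfile A k 4) z + β * iteratedDeriv 2 (sechPowProfile A k 4) z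
      + sechPowProfile A k 4 z ^ 2 / 2 - c * sechPowProfile A k 4 z =
    A * (256 * k ^ 4 + 16 * β * k ^ 2 - c) * sech (k * z) ^ 4
      - 20 * A * k ^ 2 * (52 * k ^ 2 + β) * sech (k * z) ^ 6
      + A * (840 * k ^ 4 + A / 2) * sech (k * z) ^ 8 := by
  rw [iteratedDeriv_sechPowProfile, iteratedDeriv_sechPowProfile, iteratedDeriv_four_sech_pow,
    iteratedDeriv_two_sech_pow, sechPowProfile]
  push_cast
  ring

theorem isKawaharaSolution_sechPowProfile_four {β c A k : ℝ}
    (hc : c = 256 * k ^ 4 + 16 * β * k ^ 2) (hβ : β = -52 * k ^ 2) (hA : A = -1680 * k ^ 4) :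
    IsKawaharaSolution β (travellingWave c (sechPowProfile A k 4)) := by
  refine isKawaharaSolution_travellingWave (K := 0) (contDiff_sechPowProfile A k 4) fun z => ?_
  rw [kawahara_ode_sechPowProfile_four, hc, hβ, hA]
  ring

/-- Zero-background solitary wave of the Kawahara equation:
with `c = -(36/169)·β²`, the function
`u(t,x) = -(105/169)·β²·sech(√(-β/52)·(x - c·t))⁴`
is a smooth solution of `u_t + u·u_x + β·u_xxx + u_xxxxx = 0`. -/
theorem kawahara_zero_background_soliton (β c : ℝ) (hβ : β < 0)
    (hc : c = -(36 / 169) * β ^ 2)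
    (u : ℝ → ℝ → ℝ)
    (hu : u = fun t x =>
      -(105 / 169) * β ^ 2 * (1 / Real.cosh (Real.sqrt (-β / 52) * (x - c * t))) ^ 4) :
    ContDiff ℝ (⊤ : ℕ∞) (fun q : ℝ × ℝ => u q.1 q.2) ∧
      ∀ t x : ℝ,
        pt2 u t x + u t x * px2 u t x + β * px2 (px2 (px2 u)) t x
          + px2 (px2 (px2 (px2 (px2 u)))) t x = 0 := by
  set k := Real.sqrt (-β / 52)
  have hk : k ^ 2 = -β / 52 := Real.sq_sqrt (by linarith)
  have hβk : β = -52 * k ^ 2 := by linarith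
  have hck : c = 256 * k ^ 4 + 16 * β * k ^ 2 := by rw [hc, hβk]; ring
  have hamplitude : -(105 / 169) * β ^ 2 = -1680 * k ^ 4 := by rw [hβk]; ring
  have hwave : u = travellingWave c (sechPowProfile (-(105 / 169) * β ^ 2) k 4) := hu
  rw [hwave]
  exact ⟨contDiff_travellingWave (contDiff_sechPowProfile _ k 4),
    isKawaharaSolution_sechPowProfile_four hck hβk hamplitude⟩
end
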